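/- Let g = γ*h, g_ε = γ_{g_ε,h_ε}*h_ε. Then ‖γ − γ_{g_ε,h_ε}‖²_{L²(ρ)} ≤ (2/m_ω^{h_ε}) ( M_ω^γ ‖h − h_ε‖²_{L²(ρ)} + ‖g − g_ε‖²_{H¹_α(ρ)} ). -/

import Mathlib

open MeasureTheory Complex Real

/-- Laplace transform of a real function on `[0,∞)`. -/
noncomputable def laplace (f : ℝ → ℝ) (z : ℂ) : ℂ :=
  ∫ t in Set.Ioi (0 : ℝ), (f t : ℂ) * Complex.exp (-z * t)

/-- Causal convolution on `[0,∞)`. -/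
noncomputable def conv (f h : ℝ → ℝ) (t : ℝ) : ℝ :=
  ∫ s in (0 : ℝ)..t, f (t - s) * h s

/-- Combined spectral weight `α₁|f̂(z)|² + α₂|zf̂(z)|²` along the line `Re z = ω`. -/
noncomputable def specWeight (f : ℝ → ℝ) (α₁ α₂ ω τ : ℝ) : ℝ :=
  α₁ * ‖laplace f ((ω : ℂ) + τ * Complex.I)‖ ^ 2 +
    α₂ * ‖((ω : ℂ) + τ * Complex.I) * laplace f ((ω : ℂ) + τ * Complex.I)‖ ^ 2

/-!
By Plancherel, the Laplace transform along `Re z = ω` is, up to the factor `√(2π)`, an isometry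
from the weighted space `L²((0, ∞), exp (-2ωt) dt)`; it turns causal convolution into a product and,
for functions vanishing at `0`, differentiation into multiplication by `z`. Hence the
squared weighted `H¹` norm of `f := g - gε` is, up to the factor `2π`, the integral of
`specWeight f`, and the bound reduces to a pointwise one. That one comes from
`(γ̂ - γ̂ε) ĥε = (γ̂ ĥ - γ̂ε ĥε) - γ̂ (ĥ - ĥε) = (ĝ - ĝε) - γ̂ (ĥ - ĥε)`
by squaring, using `|x - y|² ≤ 2 (|x|² + |y|²)`, and multiplying by `α₁ + α₂ |z|²`.
-/

section Plancherel

open FourierTransform SchwartzMap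

variable {V F : Type*} [NormedAddCommGroup V] [InnerProductSpace ℝ V] [FiniteDimensional ℝ V]
  [MeasurableSpace V] [BorelSpace V] [NormedAddCommGroup F] [InnerProductSpace ℂ F]
  [CompleteSpace F] {f : V → F}

-- Both sides define the same tempered distribution.
lemma fourier_toLp_ae_eq (hf : Integrable f) (hf₂ : MemLp f 2) :
    (𝓕 (hf₂.toLp f) : Lp F 2 (volume : Measure V)) =ᵐ[volume] 𝓕 f := by
  have hcont : Continuous (𝓕 f) :=
    VectorFourier.fourierIntegral_continuous Real.continuous_fourierChar (by exact continuous_inner)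
      hf
  refine ae_eq_of_integral_contDiff_smul_eq ((Lp.memLp _).locallyIntegrable (by norm_num))
    hcont.locallyIntegrable fun φ hφ hφ_supp => ?_
  have hsupp : HasCompactSupport (Complex.ofRealCLM ∘ φ) := hφ_supp.comp_left rfl
  have hsmooth : ContDiff ℝ (⊤ : ℕ∞) (Complex.ofRealCLM ∘ φ) := by fun_prop
  let u : 𝓢(V, ℂ) := hsupp.toSchwartzMap hsmooth
  calc ∫ x, φ x • (𝓕 (hf₂.toLp f) : Lp F 2 (volume : Measure V)) x
      = ((𝓕 (hf₂.toLp f) : Lp F 2 (volume : Measure V)) : 𝓢'(V, F)) u := by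
        simp [u, Lp.toTemperedDistribution_apply]
    _ = ∫ x, 𝓕 u x • hf₂.toLp f x := by
        rw [← Lp.fourier_toTemperedDistribution_eq, TemperedDistribution.fourier_apply,
          Lp.toTemperedDistribution_apply]
    _ = ∫ x, 𝓕 u x • f x := by
        refine integral_congr_ae ?_
        filter_upwards [hf₂.coeFn_toLp] with x hx
        rw [hx]
    _ = ∫ x, u x • 𝓕 f x := by
        simpa using! VectorFourier.integral_fourierIntegral_smul_eq_flip (L := innerₗ V)
          Real.continuous_fourierChar continuous_inner u.integrable hf
    _ = ∫ x, φ x • 𝓕 f x := by simp [u]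

lemma memLp_two_fourier (hf : Integrable f) (hf₂ : MemLp f 2) : MemLp (𝓕 f) 2 :=
  (memLp_congr_ae (fourier_toLp_ae_eq hf hf₂)).1 (Lp.memLp _)

lemma integral_sq_norm_fourier (hf : Integrable f) (hf₂ : MemLp f 2) :
    ∫ ξ, ‖𝓕 f ξ‖ ^ 2 = ∫ x, ‖f x‖ ^ 2 := by
  have hnorm : lpNorm (𝓕 f) 2 volume = lpNorm f 2 volume := by
    have h := Lp.norm_fourier_eq (hf₂.toLp f)
    rwa [Lp.norm_def, eLpNorm_congr_ae (fourier_toLp_ae_eq hf hf₂), Lp.norm_toLp,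
      toReal_eLpNorm (memLp_two_fourier hf hf₂).1, toReal_eLpNorm hf₂.1] at h
  have hsq : ∀ {g : V → F}, MemLp g 2 → lpNorm g 2 volume ^ 2 = ∫ x, ‖g x‖ ^ 2 := fun hg => by
    rw [lpNorm_eq_integral_norm_rpow_toReal (by norm_num) (by norm_num) hg.1, ← Real.rpow_natCast,
      ← Real.rpow_mul (by positivity)]
    simp
  rw [← hsq (memLp_two_fourier hf hf₂), hnorm, hsq hf₂]

end Plancherel

section LeibnizRule

variable {E : Type*} [NormedAddCommGroup E] [NormedSpace ℝ E] {Φ Φ' : ℝ → ℝ → E}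

lemma hasDerivAt_intervalIntegral_param (hΦ : Continuous ↿Φ) (hΦ' : Continuous ↿Φ')
    (hderiv : ∀ x s, HasDerivAt (Φ · s) (Φ' x s) x) (a b x : ℝ) :
    HasDerivAt (fun x => ∫ s in a..b, Φ x s) (∫ s in a..b, Φ' x s) x := by
  obtain ⟨B, hB⟩ := ((isCompact_closedBall x 1).prod
    (isCompact_uIcc (a := a) (b := b))).exists_bound_of_continuousOn hΦ'.continuousOn
  have hslice {Ψ : ℝ → ℝ → E} (hΨ : Continuous ↿Ψ) (y : ℝ) : Continuous (Ψ y) := hΨ.uncurry_left y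
  refine (intervalIntegral.hasDerivAt_integral_of_dominated_loc_of_deriv_le
    (bound := fun _ => B) (Metric.closedBall_mem_nhds x one_pos)
    (.of_forall fun y => (hslice hΦ y).aestronglyMeasurable) ((hslice hΦ x).intervalIntegrable _ _)
    (hslice hΦ' x).aestronglyMeasurable
    (.of_forall fun s hs y hy => hB (y, s) ⟨hy, Set.uIoc_subset_uIcc hs⟩)
    intervalIntegrable_const (.of_forall fun s _ y _ => hderiv y s)).2

-- Chain rule along the diagonal of `(x, y) ↦ ∫ s in a..x, Φ y s`.
lemma hasDerivAt_intervalIntegral_param_upper [CompleteSpace E] (hΦ : Continuous ↿Φ)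
    (hΦ' : Continuous ↿Φ') (hderiv : ∀ x s, HasDerivAt (Φ · s) (Φ' x s) x) (a t : ℝ) :
    HasDerivAt (fun x => ∫ s in a..x, Φ x s) (Φ t t + ∫ s in a..t, Φ' t s) t := by
  have hslice (y : ℝ) : Continuous (Φ y) := hΦ.uncurry_left y
  have hdiag : Continuous fun p : ℝ × ℝ => Φ p.2 p.1 := hΦ.comp continuous_swap
  have hparam : Continuous fun p : ℝ × ℝ => ∫ s in a..p.1, Φ' p.2 s :=
    intervalIntegral.continuous_parametric_intervalIntegral_of_continuous
      (f := fun (p : ℝ × ℝ) s => Φ' p.2 s)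
      (hΦ'.comp ((continuous_snd.comp continuous_fst).prodMk continuous_snd)) continuous_fst
  have hspan : Continuous (ContinuousLinearMap.toSpanSingleton ℝ : E → ℝ →L[ℝ] E) :=
    ContinuousLinearMap.toSpanSingletonCLE.continuous
  have hstrict := hasStrictFDerivAt_uncurry_coprod (𝕜 := ℝ) (u := (t, t))
    (f := fun x y => ∫ s in a..x, Φ y s)
    (f₁ := fun x y => .toSpanSingleton ℝ (Φ y x))
    (f₂ := fun x y => .toSpanSingleton ℝ (∫ s in a..x, Φ' y s))
    (.of_forall fun p => ((hslice p.2).integral_hasStrictDerivAt a p.1).hasDerivAt.hasFDerivAt)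
    (.of_forall fun p => (hasDerivAt_intervalIntegral_param hΦ hΦ' hderiv a p.1 p.2).hasFDerivAt)
    (hspan.comp hdiag).continuousAt (hspan.comp hparam).continuousAt
  have hcomp := hstrict.hasFDerivAt.comp_hasDerivAt (f := fun x : ℝ => (x, x)) t
    ((hasDerivAt_id t).prodMk (hasDerivAt_id t))
  refine hcomp.congr_deriv ?_
  simp [Function.HasUncurry.uncurry]

end LeibnizRule

/-- `f` is a measurable function on `[0, ∞)` of exponential order strictly less than `ω`, that is
`f t = O(exp (a * t))` for some `a < ω`. The constant is uniform on `[0, ∞)`, so `f` is in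
particular locally bounded. For this class the Laplace integral converges absolutely on
`ω ≤ Re z`. -/
structure HasExpOrderLT (f : ℝ → ℝ) (ω : ℝ) : Prop where
  aestronglyMeasurable : AEStronglyMeasurable f (volume.restrict (Set.Ioi 0))
  exists_bound : ∃ a < ω, ∃ K : ℝ, ∀ t, 0 ≤ t → |f t| ≤ K * Real.exp (a * t)

namespace HasExpOrderLT

variable {f g : ℝ → ℝ} {ω : ℝ}

lemma exists_common_bound (hf : HasExpOrderLT f ω) (hg : HasExpOrderLT g ω) :
    ∃ a < ω, ∃ K : ℝ, 0 ≤ K ∧ ∀ t, 0 ≤ t →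
      |f t| ≤ K * Real.exp (a * t) ∧ |g t| ≤ K * Real.exp (a * t) := by
  obtain ⟨a, ha, K, hK⟩ := hf.exists_bound
  obtain ⟨b, hb, L, hL⟩ := hg.exists_bound
  have hK₀ : 0 ≤ K := by simpa using (abs_nonneg _).trans (hK 0 le_rfl)
  refine ⟨max a b, max_lt ha hb, max K L, hK₀.trans (le_max_left _ _), fun t ht => ⟨?_, ?_⟩⟩
  · exact (hK t ht).trans (by gcongr <;> exact le_max_left _ _)
  · exact (hL t ht).trans (by gcongr <;> exact le_max_right _ _)

protected lemma add (hf : HasExpOrderLT f ω) (hg : HasExpOrderLT g ω) :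
    HasExpOrderLT (fun t => f t + g t) ω := by
  obtain ⟨a, ha, K, -, hK⟩ := hf.exists_common_bound hg
  refine ⟨hf.aestronglyMeasurable.add hg.aestronglyMeasurable, a, ha, K + K, fun t ht => ?_⟩
  rw [add_mul]
  exact (abs_add_le _ _).trans (add_le_add (hK t ht).1 (hK t ht).2)

protected lemma const_mul (hf : HasExpOrderLT f ω) (c : ℝ) :
    HasExpOrderLT (fun t => c * f t) ω := by
  obtain ⟨a, ha, K, hK⟩ := hf.exists_bound
  refine ⟨hf.aestronglyMeasurable.const_mul c, a, ha, |c| * K, fun t ht => ?_⟩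
  rw [abs_mul, mul_assoc]
  exact mul_le_mul_of_nonneg_left (hK t ht) (abs_nonneg c)

protected lemma sub (hf : HasExpOrderLT f ω) (hg : HasExpOrderLT g ω) :
    HasExpOrderLT (fun t => f t - g t) ω := by
  simpa [sub_eq_add_neg] using hf.add (hg.const_mul (-1))

lemma exists_norm_mul_cexp_le (hf : HasExpOrderLT f ω) {z : ℂ} (hz : ω ≤ z.re) :
    ∃ b > 0, ∃ K : ℝ, ∀ t : ℝ, 0 ≤ t →
      ‖(f t : ℂ) * Complex.exp (-z * t)‖ ≤ K * Real.exp (-b * t) := by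
  obtain ⟨a, ha, K, hK⟩ := hf.exists_bound
  refine ⟨z.re - a, by linarith, K, fun t ht => ?_⟩
  calc ‖(f t : ℂ) * Complex.exp (-z * t)‖ = |f t| * Real.exp (-z.re * t) := by
        simp [Complex.norm_exp]
    _ ≤ K * Real.exp (a * t) * Real.exp (-z.re * t) := by gcongr; exact hK t ht
    _ = K * Real.exp (-(z.re - a) * t) := by rw [mul_assoc, ← Real.exp_add]; ring_nf

lemma integrableOn_mul_cexp (hf : HasExpOrderLT f ω) {z : ℂ} (hz : ω ≤ z.re) :
    IntegrableOn (fun t : ℝ => (f t : ℂ) * Complex.exp (-z * t)) (Set.Ioi 0) := by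
  obtain ⟨b, hb, K, hK⟩ := hf.exists_norm_mul_cexp_le hz
  exact ((exp_neg_integrableOn_Ioi 0 hb).const_mul K).mono'
    ((Complex.continuous_ofReal.comp_aestronglyMeasurable hf.aestronglyMeasurable).mul
      (by fun_prop)) (ae_restrict_of_forall_mem measurableSet_Ioi fun t ht => hK t (le_of_lt ht))

lemma tendsto_mul_cexp (hf : HasExpOrderLT f ω) {z : ℂ} (hz : ω ≤ z.re) :
    Filter.Tendsto (fun t : ℝ => (f t : ℂ) * Complex.exp (-z * t)) Filter.atTop (nhds 0) := by
  obtain ⟨b, hb, K, hK⟩ := hf.exists_norm_mul_cexp_le hz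
  refine squeeze_zero_norm' (Filter.eventually_atTop.2 ⟨0, hK⟩) ?_
  simpa using (Real.tendsto_exp_atBot.comp
    (Filter.tendsto_id.const_mul_atTop_of_neg (neg_neg_of_pos hb))).const_mul K

lemma integrableOn_sq_mul_exp (hf : HasExpOrderLT f ω) :
    IntegrableOn (fun t => f t ^ 2 * Real.exp (-2 * ω * t)) (Set.Ioi 0) := by
  obtain ⟨a, ha, K, hK⟩ := hf.exists_bound
  refine Integrable.mono' ((exp_neg_integrableOn_Ioi 0 (b := 2 * (ω - a))
    (by linarith)).const_mul (K ^ 2)) ((hf.aestronglyMeasurable.pow 2).mul (by fun_prop))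
    (ae_restrict_of_forall_mem measurableSet_Ioi fun t ht => ?_)
  calc ‖f t ^ 2 * Real.exp (-2 * ω * t)‖ = |f t| ^ 2 * Real.exp (-2 * ω * t) := by simp
    _ ≤ (K * Real.exp (a * t)) ^ 2 * Real.exp (-2 * ω * t) := by
        gcongr; exact hK t (le_of_lt ht)
    _ = K ^ 2 * Real.exp (-(2 * (ω - a)) * t) := by
        rw [mul_pow, ← Real.exp_nat_mul, mul_assoc, ← Real.exp_add]; push_cast; ring_nf

end HasExpOrderLT

section Convolution

variable {f h : ℝ → ℝ} {ω : ℝ} {z : ℂ}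

lemma conv_comm (f h : ℝ → ℝ) : conv f h = conv h f := by
  funext t
  simpa [conv, mul_comm] using
    intervalIntegral.integral_comp_sub_left (a := 0) (b := t) (fun s => f s * h (t - s)) t

lemma hasDerivAt_conv (hf : Continuous f) (hh : ContDiff ℝ 1 h) (t : ℝ) :
    HasDerivAt (conv f h) (f t * h 0 + conv f (deriv h) t) t := by
  have hh₀ : Continuous h := hh.continuous
  have hderiv (x s : ℝ) : HasDerivAt (fun x => h (x - s) * f s) (deriv h (x - s) * f s) x :=
    ((hh.differentiable one_ne_zero (x - s)).hasDerivAt.comp_sub_const x s).mul_const (f s)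
  rw [conv_comm f h, conv_comm f (deriv h)]
  exact (hasDerivAt_intervalIntegral_param_upper
    (Φ := fun x s => h (x - s) * f s) (Φ' := fun x s => deriv h (x - s) * f s)
    (by simp only [Function.HasUncurry.uncurry, id]; fun_prop)
    (by simp only [Function.HasUncurry.uncurry, id]; fun_prop) hderiv 0 t).congr_deriv
    (by rw [sub_self, mul_comm, conv])

-- The exponential weight is multiplicative, hence distributes over the convolution.
lemma ofReal_conv_mul_cexp (f h : ℝ → ℝ) (z : ℂ) (t : ℝ) :
    (conv f h t : ℂ) * Complex.exp (-z * t) =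
      ∫ s in (0 : ℝ)..t, ContinuousLinearMap.mul ℝ ℂ (h s * Complex.exp (-z * s))
        (f (t - s) * Complex.exp (-z * (t - s : ℝ))) := by
  rw [conv, ← intervalIntegral.integral_ofReal, ← intervalIntegral.integral_mul_const]
  congr 1 with s
  have hexp : Complex.exp (-z * t) =
      Complex.exp (-z * s) * Complex.exp (-z * (t - s : ℝ)) := by
    rw [← Complex.exp_add]; push_cast; ring_nf
  rw [hexp, ContinuousLinearMap.mul_apply']
  push_cast
  ring

lemma laplace_conv (hf : HasExpOrderLT f ω) (hh : HasExpOrderLT h ω) (hz : ω ≤ z.re) :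
    laplace (conv f h) z = laplace f z * laplace h z := by
  simp only [laplace, ofReal_conv_mul_cexp]
  rw [integral_posConvolution (hh.integrableOn_mul_cexp hz) (hf.integrableOn_mul_cexp hz),
    ContinuousLinearMap.mul_apply', mul_comm]

lemma aestronglyMeasurable_conv (hf : HasExpOrderLT f ω) (hh : HasExpOrderLT h ω) :
    AEStronglyMeasurable (conv f h) (volume.restrict (Set.Ioi 0)) := by
  have hweighted : AEStronglyMeasurable
      (fun t : ℝ => (conv f h t : ℂ) * Complex.exp (-ω * t)) (volume.restrict (Set.Ioi 0)) := by
    have hint := (integrable_posConvolution (hh.integrableOn_mul_cexp (z := ω) le_rfl)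
      (hf.integrableOn_mul_cexp (z := ω) le_rfl) (ContinuousLinearMap.mul ℝ ℂ))
    simpa only [posConvolution, ← ofReal_conv_mul_cexp,
      aestronglyMeasurable_indicator_iff measurableSet_Ioi] using hint.aestronglyMeasurable
  have hunweight : AEStronglyMeasurable (fun t : ℝ => ((conv f h t : ℂ) * Complex.exp (-ω * t)) *
      Complex.exp (ω * t)) (volume.restrict (Set.Ioi 0)) := hweighted.mul (by fun_prop)
  simpa [mul_assoc, ← Complex.exp_add] using hunweight.re

lemma abs_conv_le {a K L t : ℝ} (hK : ∀ s, 0 ≤ s → |f s| ≤ K * Real.exp (a * s))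
    (hL : ∀ s, 0 ≤ s → |h s| ≤ L * Real.exp (a * s)) (ht : 0 ≤ t) :
    |conv f h t| ≤ K * L * Real.exp (a * t) * t := by
  have hK₀ : 0 ≤ K := by simpa using (abs_nonneg _).trans (hK 0 le_rfl)
  have hbound : ∀ s ∈ Set.uIoc 0 t, ‖f (t - s) * h s‖ ≤ K * L * Real.exp (a * t) := fun s hs => by
    rw [Set.uIoc_of_le ht] at hs
    calc ‖f (t - s) * h s‖ = |f (t - s)| * |h s| := by simp
      _ ≤ K * Real.exp (a * (t - s)) * (L * Real.exp (a * s)) := by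
          gcongr
          exacts [hK _ (sub_nonneg.2 hs.2), hL s hs.1.le]
      _ = K * L * Real.exp (a * t) := by rw [mul_mul_mul_comm, ← Real.exp_add]; ring_nf
  simpa [conv, abs_of_nonneg ht] using intervalIntegral.norm_integral_le_of_norm_le_const hbound

-- The factor `t` in the bound for the convolution is absorbed by a slightly larger exponent.
protected lemma HasExpOrderLT.conv (hf : HasExpOrderLT f ω) (hh : HasExpOrderLT h ω) :
    HasExpOrderLT (conv f h) ω := by
  obtain ⟨a, ha, K, hK₀, hK⟩ := hf.exists_common_bound hh
  obtain ⟨b, hab, hb⟩ := exists_between ha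
  have hba : 0 < b - a := sub_pos.2 hab
  refine ⟨aestronglyMeasurable_conv hf hh, b, hb, K * K / (b - a), fun t ht => ?_⟩
  have ht_le : t ≤ Real.exp ((b - a) * t) / (b - a) := by
    rw [le_div_iff₀ hba]
    linarith [Real.add_one_le_exp ((b - a) * t)]
  calc |conv f h t| ≤ K * K * Real.exp (a * t) * t :=
        abs_conv_le (fun s hs => (hK s hs).1) (fun s hs => (hK s hs).2) ht
    _ ≤ K * K * Real.exp (a * t) * (Real.exp ((b - a) * t) / (b - a)) := by gcongr
    _ = K * K / (b - a) * (Real.exp (a * t) * Real.exp ((b - a) * t)) := by ring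
    _ = K * K / (b - a) * Real.exp (b * t) := by rw [← Real.exp_add]; ring_nf

lemma HasExpOrderLT.deriv_conv (hf : HasExpOrderLT f ω) (hf_cont : Continuous f)
    (hh : ContDiff ℝ 1 h) (hh' : HasExpOrderLT (deriv h) ω) :
    HasExpOrderLT (deriv (conv f h)) ω := by
  have hderiv : deriv (conv f h) = fun t => h 0 * f t + conv f (deriv h) t :=
    funext fun t => by rw [(hasDerivAt_conv hf_cont hh t).deriv, mul_comm]
  rw [hderiv]
  exact (hf.const_mul (h 0)).add (hf.conv hh')

end Convolution

section Laplace

variable {f g f' : ℝ → ℝ} {ω : ℝ} {z : ℂ}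

lemma laplace_sub (hf : HasExpOrderLT f ω) (hg : HasExpOrderLT g ω) (hz : ω ≤ z.re) :
    laplace (fun t => f t - g t) z = laplace f z - laplace g z := by
  simp only [laplace, ofReal_sub, sub_mul]
  exact integral_sub (hf.integrableOn_mul_cexp hz) (hg.integrableOn_mul_cexp hz)

lemma laplace_of_hasDerivAt (hf : HasExpOrderLT f ω) (hf' : HasExpOrderLT f' ω)
    (hcont : ContinuousWithinAt f (Set.Ici 0) 0) (hderiv : ∀ t, 0 < t → HasDerivAt f (f' t) t)
    (hz : ω ≤ z.re) : laplace f' z = z * laplace f z - f 0 := by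
  have hprod : ∀ t ∈ Set.Ioi (0 : ℝ), HasDerivAt (fun t : ℝ => (f t : ℂ) * Complex.exp (-z * t))
      ((f' t : ℂ) * Complex.exp (-z * t) - z * ((f t : ℂ) * Complex.exp (-z * t))) t := by
    intro t ht
    have hexp : HasDerivAt (fun t : ℝ => Complex.exp (-z * t)) (Complex.exp (-z * t) * -z) t := by
      simpa using ((hasDerivAt_id (t : ℂ)).const_mul (-z)).cexp.comp_ofReal
    exact ((hderiv t ht).ofReal_comp.mul hexp).congr_deriv (by ring)
  have hint := hf.integrableOn_mul_cexp hz
  have hint' := hf'.integrableOn_mul_cexp hz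
  have hcont₀ : ContinuousWithinAt (fun t : ℝ => (f t : ℂ) * Complex.exp (-z * t))
      (Set.Ici 0) 0 :=
    (Complex.continuous_ofReal.continuousAt.comp_continuousWithinAt hcont).mul (by fun_prop)
  have hftc := integral_Ioi_of_hasDerivAt_of_tendsto hcont₀ hprod (hint'.sub (hint.const_mul z))
    (hf.tendsto_mul_cexp hz)
  rw [integral_sub hint' (hint.const_mul z), integral_const_mul, ofReal_zero, mul_zero,
    Complex.exp_zero, mul_one] at hftc
  simp only [laplace]
  linear_combination hftc

end Laplace

section LaplacePlancherel

open FourierTransform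

variable {f : ℝ → ℝ} {ω : ℝ}

/-- The function `t ↦ f t * exp (-ω * t)` on `(0, ∞)`, extended by zero to the whole line: the
function whose Fourier transform is the Laplace transform of `f` along `Re z = ω`. -/
noncomputable def expWeighted (f : ℝ → ℝ) (ω : ℝ) : ℝ → ℂ :=
  Set.indicator (Set.Ioi 0) fun t : ℝ => (f t : ℂ) * Complex.exp (-ω * t)

lemma laplace_eq_fourier_expWeighted (f : ℝ → ℝ) (ω τ : ℝ) :
    laplace f (ω + τ * Complex.I) = 𝓕 (expWeighted f ω) (τ / (2 * π)) := by
  rw [Real.fourier_eq', laplace, ← integral_indicator measurableSet_Ioi]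
  congr 1 with t
  simp only [expWeighted, Set.indicator_apply, smul_eq_mul, mul_ite, mul_zero]
  split_ifs
  · rw [mul_left_comm, ← Complex.exp_add]
    congr 2
    simp only [RCLike.inner_apply, conj_trivial]
    push_cast
    field_simp
    ring
  · rfl

lemma sq_norm_expWeighted (f : ℝ → ℝ) (ω : ℝ) :
    (fun t => ‖expWeighted f ω t‖ ^ 2) =
      Set.indicator (Set.Ioi 0) fun t => f t ^ 2 * Real.exp (-2 * ω * t) := by
  ext t
  simp only [expWeighted, Set.indicator_apply]
  split_ifs
  · rw [norm_mul, mul_pow, Complex.norm_real, Complex.norm_exp, Real.norm_eq_abs, sq_abs,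
      ← Real.exp_nat_mul]
    congr 2
    simp [mul_assoc]
  · simp

namespace HasExpOrderLT

lemma integrable_expWeighted (hf : HasExpOrderLT f ω) : Integrable (expWeighted f ω) :=
  (integrable_indicator_iff measurableSet_Ioi).2 (hf.integrableOn_mul_cexp (z := ω) le_rfl)

lemma memLp_two_expWeighted (hf : HasExpOrderLT f ω) : MemLp (expWeighted f ω) 2 := by
  rw [memLp_two_iff_integrable_sq_norm hf.integrable_expWeighted.aestronglyMeasurable,
    sq_norm_expWeighted, integrable_indicator_iff measurableSet_Ioi]
  exact hf.integrableOn_sq_mul_exp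

lemma integrable_sq_norm_laplace (hf : HasExpOrderLT f ω) :
    Integrable fun τ : ℝ => ‖laplace f (ω + τ * Complex.I)‖ ^ 2 := by
  simp only [laplace_eq_fourier_expWeighted]
  have hF := memLp_two_fourier hf.integrable_expWeighted hf.memLp_two_expWeighted
  exact ((memLp_two_iff_integrable_sq_norm hF.1).1 hF).comp_div Real.two_pi_pos.ne'

lemma integral_sq_norm_laplace (hf : HasExpOrderLT f ω) :
    ∫ τ : ℝ, ‖laplace f (ω + τ * Complex.I)‖ ^ 2 =
      2 * π * ∫ t in Set.Ioi 0, f t ^ 2 * Real.exp (-2 * ω * t) := by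
  simp only [laplace_eq_fourier_expWeighted]
  rw [Measure.integral_comp_div (fun ξ => ‖𝓕 (expWeighted f ω) ξ‖ ^ 2) (2 * π),
    integral_sq_norm_fourier hf.integrable_expWeighted hf.memLp_two_expWeighted,
    sq_norm_expWeighted, integral_indicator measurableSet_Ioi, abs_of_pos Real.two_pi_pos,
    smul_eq_mul]

end HasExpOrderLT

end LaplacePlancherel

section SpecWeight

variable {f f' : ℝ → ℝ} {α₁ α₂ ω : ℝ}

lemma specWeight_eq_mul (f : ℝ → ℝ) (α₁ α₂ ω τ : ℝ) :
    specWeight f α₁ α₂ ω τ =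
      (α₁ + α₂ * ‖(ω : ℂ) + τ * Complex.I‖ ^ 2) * ‖laplace f (ω + τ * Complex.I)‖ ^ 2 := by
  rw [specWeight, norm_mul]
  ring

lemma iInf_specWeight_le (f : ℝ → ℝ) (ω : ℝ) (hα₁ : 0 ≤ α₁) (hα₂ : 0 ≤ α₂) (τ : ℝ) :
    ⨅ τ : ℝ, specWeight f α₁ α₂ ω τ ≤ specWeight f α₁ α₂ ω τ := by
  refine ciInf_le ⟨0, ?_⟩ τ
  rintro _ ⟨τ, rfl⟩
  simp only [specWeight]
  positivity

lemma specWeight_of_hasDerivAt (hf : HasExpOrderLT f ω) (hf' : HasExpOrderLT f' ω)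
    (hcont : ContinuousWithinAt f (Set.Ici 0) 0) (hderiv : ∀ t, 0 < t → HasDerivAt f (f' t) t)
    (hf₀ : f 0 = 0) (α₁ α₂ τ : ℝ) :
    specWeight f α₁ α₂ ω τ = α₁ * ‖laplace f (ω + τ * Complex.I)‖ ^ 2 +
      α₂ * ‖laplace f' (ω + τ * Complex.I)‖ ^ 2 := by
  rw [specWeight, laplace_of_hasDerivAt hf hf' hcont hderiv (by simp), hf₀, ofReal_zero, sub_zero]

lemma integrable_specWeight (hf : HasExpOrderLT f ω) (hf' : HasExpOrderLT f' ω)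
    (hcont : ContinuousWithinAt f (Set.Ici 0) 0) (hderiv : ∀ t, 0 < t → HasDerivAt f (f' t) t)
    (hf₀ : f 0 = 0) (α₁ α₂ : ℝ) : Integrable (specWeight f α₁ α₂ ω) :=
  ((hf.integrable_sq_norm_laplace.const_mul α₁).add
    (hf'.integrable_sq_norm_laplace.const_mul α₂)).congr
    (.of_forall fun τ => (specWeight_of_hasDerivAt hf hf' hcont hderiv hf₀ α₁ α₂ τ).symm)

lemma integral_specWeight (hf : HasExpOrderLT f ω) (hf' : HasExpOrderLT f' ω)
    (hcont : ContinuousWithinAt f (Set.Ici 0) 0) (hderiv : ∀ t, 0 < t → HasDerivAt f (f' t) t)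
    (hf₀ : f 0 = 0) (α₁ α₂ : ℝ) :
    ∫ τ, specWeight f α₁ α₂ ω τ = 2 * π * ∫ t in Set.Ioi 0,
      (α₁ * f t ^ 2 + α₂ * f' t ^ 2) * Real.exp (-2 * ω * t) := by
  simp only [specWeight_of_hasDerivAt hf hf' hcont hderiv hf₀, add_mul, mul_assoc α₁, mul_assoc α₂]
  rw [integral_add (hf.integrable_sq_norm_laplace.const_mul α₁)
      (hf'.integrable_sq_norm_laplace.const_mul α₂),
    integral_add (hf.integrableOn_sq_mul_exp.const_mul α₁)
      (hf'.integrableOn_sq_mul_exp.const_mul α₂)]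
  simp only [integral_const_mul, hf.integral_sq_norm_laplace, hf'.integral_sq_norm_laplace]
  ring

end SpecWeight

lemma sq_norm_sub_mul_sq_norm_le {𝕜 : Type*} [NormedDivisionRing 𝕜] (a b c d : 𝕜) :
    ‖a - b‖ ^ 2 * ‖d‖ ^ 2 ≤ 2 * (‖a‖ ^ 2 * ‖c - d‖ ^ 2 + ‖a * c - b * d‖ ^ 2) := by
  have hsplit : (a - b) * d = (a * c - b * d) - a * (c - d) := by noncomm_ring
  calc ‖a - b‖ ^ 2 * ‖d‖ ^ 2 = ‖(a * c - b * d) - a * (c - d)‖ ^ 2 := by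
        rw [← hsplit, norm_mul, mul_pow]
    _ ≤ (‖a‖ * ‖c - d‖ + ‖a * c - b * d‖) ^ 2 := by
        rw [← norm_mul, add_comm]
        gcongr
        exact norm_sub_le _ _
    _ ≤ 2 * ((‖a‖ * ‖c - d‖) ^ 2 + ‖a * c - b * d‖ ^ 2) := add_sq_le
    _ = 2 * (‖a‖ ^ 2 * ‖c - d‖ ^ 2 + ‖a * c - b * d‖ ^ 2) := by rw [mul_pow]

section Stability

variable {γ γε h hε : ℝ → ℝ} {α₁ α₂ ω : ℝ}

lemma specWeight_mul_sq_norm_laplace_sub_le (hα₁ : 0 ≤ α₁) (hα₂ : 0 ≤ α₂)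
    (hγ : HasExpOrderLT γ ω) (hγε : HasExpOrderLT γε ω) (hh : HasExpOrderLT h ω)
    (hhε : HasExpOrderLT hε ω) (τ : ℝ) :
    specWeight hε α₁ α₂ ω τ * ‖laplace (fun t => γ t - γε t) (ω + τ * Complex.I)‖ ^ 2 ≤
      2 * (specWeight γ α₁ α₂ ω τ * ‖laplace (fun t => h t - hε t) (ω + τ * Complex.I)‖ ^ 2 +
        specWeight (fun t => conv γ h t - conv γε hε t) α₁ α₂ ω τ) := by
  have hre : ω ≤ ((ω : ℂ) + τ * Complex.I).re := by simp
  simp only [specWeight_eq_mul]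
  rw [laplace_sub hγ hγε hre, laplace_sub hh hhε hre, laplace_sub (hγ.conv hh) (hγε.conv hhε) hre,
    laplace_conv hγ hh hre, laplace_conv hγε hhε hre]
  set z : ℂ := ω + τ * Complex.I
  linear_combination (α₁ + α₂ * ‖z‖ ^ 2) *
    sq_norm_sub_mul_sq_norm_le (laplace γ z) (laplace γε z) (laplace h z) (laplace hε z)

lemma iInf_specWeight_mul_sq_norm_laplace_sub_le (hα₁ : 0 ≤ α₁) (hα₂ : 0 ≤ α₂)
    (hγ : HasExpOrderLT γ ω) (hγε : HasExpOrderLT γε ω) (hh : HasExpOrderLT h ω)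
    (hhε : HasExpOrderLT hε ω) (hMγ : BddAbove (Set.range (specWeight γ α₁ α₂ ω))) (τ : ℝ) :
    (⨅ τ, specWeight hε α₁ α₂ ω τ) * ‖laplace (fun t => γ t - γε t) (ω + τ * Complex.I)‖ ^ 2 ≤
      2 * ((⨆ τ, specWeight γ α₁ α₂ ω τ) *
          ‖laplace (fun t => h t - hε t) (ω + τ * Complex.I)‖ ^ 2 +
        specWeight (fun t => conv γ h t - conv γε hε t) α₁ α₂ ω τ) := by
  have hm := iInf_specWeight_le hε ω hα₁ hα₂ τ
  have hM := le_ciSup hMγ τ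
  refine (mul_le_mul_of_nonneg_right hm (by positivity)).trans
    ((specWeight_mul_sq_norm_laplace_sub_le hα₁ hα₂ hγ hγε hh hhε τ).trans ?_)
  gcongr

lemma iInf_specWeight_mul_integral_sq_sub_le (hα₁ : 0 ≤ α₁) (hα₂ : 0 ≤ α₂)
    (hγ : HasExpOrderLT γ ω) (hγ_cont : Continuous γ)
    (hγε : HasExpOrderLT γε ω) (hγε_cont : Continuous γε)
    (hh : HasExpOrderLT h ω) (hh_diff : ContDiff ℝ 1 h) (hh' : HasExpOrderLT (deriv h) ω)
    (hhε : HasExpOrderLT hε ω) (hhε_diff : ContDiff ℝ 1 hε) (hhε' : HasExpOrderLT (deriv hε) ω)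
    (hMγ : BddAbove (Set.range (specWeight γ α₁ α₂ ω))) :
    (⨅ τ, specWeight hε α₁ α₂ ω τ) *
        ∫ t in Set.Ioi 0, (γ t - γε t) ^ 2 * Real.exp (-2 * ω * t) ≤
      2 * ((⨆ τ, specWeight γ α₁ α₂ ω τ) *
          (∫ t in Set.Ioi 0, (h t - hε t) ^ 2 * Real.exp (-2 * ω * t)) +
        ∫ t in Set.Ioi 0,
          (α₁ * (conv γ h t - conv γε hε t) ^ 2 +
            α₂ * (deriv (conv γ h) t - deriv (conv γε hε) t) ^ 2) * Real.exp (-2 * ω * t)) := by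
  set m := ⨅ τ, specWeight hε α₁ α₂ ω τ
  set M := ⨆ τ, specWeight γ α₁ α₂ ω τ
  have hf := (hγ.conv hh).sub (hγε.conv hhε)
  have hf' := (hγ.deriv_conv hγ_cont hh_diff hh').sub (hγε.deriv_conv hγε_cont hhε_diff hhε')
  have hderiv (t : ℝ) : HasDerivAt (fun t => conv γ h t - conv γε hε t)
      (deriv (conv γ h) t - deriv (conv γε hε) t) t :=
    (hasDerivAt_conv hγ_cont hh_diff t).differentiableAt.hasDerivAt.sub
      (hasDerivAt_conv hγε_cont hhε_diff t).differentiableAt.hasDerivAt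
  have hcont := (hderiv 0).continuousAt.continuousWithinAt (s := Set.Ici 0)
  have hf₀ : conv γ h 0 - conv γε hε 0 = 0 := by simp [conv]
  have hγ_int := (hγ.sub hγε).integrable_sq_norm_laplace
  have hh_int := (hh.sub hhε).integrable_sq_norm_laplace
  have hf_int := integrable_specWeight hf hf' hcont (fun t _ => hderiv t) hf₀ α₁ α₂
  have hintegrated := integral_mono (hγ_int.const_mul m)
    (((hh_int.const_mul M).add hf_int).const_mul 2)
    (iInf_specWeight_mul_sq_norm_laplace_sub_le hα₁ hα₂ hγ hγε hh hhε hMγ)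
  simp only [Pi.add_apply] at hintegrated
  rw [integral_const_mul, integral_const_mul, integral_add (hh_int.const_mul M) hf_int,
    integral_const_mul, (hγ.sub hγε).integral_sq_norm_laplace,
    (hh.sub hhε).integral_sq_norm_laplace,
    integral_specWeight hf hf' hcont (fun t _ => hderiv t) hf₀] at hintegrated
  refine le_of_mul_le_mul_left ?_ Real.two_pi_pos
  linear_combination hintegrated

end Stability

theorem error_bound_estimated_h_general {γ γε h hε g gε : ℝ → ℝ} {α₁ α₂ ω : ℝ}
    (hα₁ : 0 ≤ α₁) (hα₂ : 0 ≤ α₂)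
    (hγ : HasExpOrderLT γ ω) (hγ_cont : Continuous γ)
    (hγε : HasExpOrderLT γε ω) (hγε_cont : Continuous γε)
    (hh : HasExpOrderLT h ω) (hh_diff : ContDiff ℝ 1 h) (hh' : HasExpOrderLT (deriv h) ω)
    (hhε : HasExpOrderLT hε ω) (hhε_diff : ContDiff ℝ 1 hε) (hhε' : HasExpOrderLT (deriv hε) ω)
    (hmε : 0 < ⨅ τ, specWeight hε α₁ α₂ ω τ)
    (hMγ : BddAbove (Set.range (specWeight γ α₁ α₂ ω)))
    (hg : ∀ t, 0 < t → g t = conv γ h t) (hgε : ∀ t, 0 < t → gε t = conv γε hε t) :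
    (∫ t in Set.Ioi 0, (γ t - γε t) ^ 2 * Real.exp (-2 * ω * t)) ≤
      (2 / ⨅ τ, specWeight hε α₁ α₂ ω τ) *
        ((⨆ τ, specWeight γ α₁ α₂ ω τ) *
            (∫ t in Set.Ioi 0, (h t - hε t) ^ 2 * Real.exp (-2 * ω * t)) +
          ∫ t in Set.Ioi 0,
            (α₁ * (g t - gε t) ^ 2 + α₂ * (deriv g t - deriv gε t) ^ 2) *
              Real.exp (-2 * ω * t)) := by
  have hg' : Set.EqOn (deriv g) (deriv (conv γ h)) (Set.Ioi 0) := Set.EqOn.deriv hg isOpen_Ioi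
  have hgε' : Set.EqOn (deriv gε) (deriv (conv γε hε)) (Set.Ioi 0) :=
    Set.EqOn.deriv hgε isOpen_Ioi
  have hconv : ∫ t in Set.Ioi 0, (α₁ * (g t - gε t) ^ 2 + α₂ * (deriv g t - deriv gε t) ^ 2) *
        Real.exp (-2 * ω * t) =
      ∫ t in Set.Ioi 0, (α₁ * (conv γ h t - conv γε hε t) ^ 2 +
        α₂ * (deriv (conv γ h) t - deriv (conv γε hε) t) ^ 2) * Real.exp (-2 * ω * t) :=
    setIntegral_congr_fun measurableSet_Ioi fun t ht => by
      simp only [hg t ht, hgε t ht, hg' ht, hgε' ht]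
  rw [hconv, div_mul_eq_mul_div, le_div_iff₀' hmε]
  exact iInf_specWeight_mul_integral_sq_sub_le hα₁ hα₂ hγ hγ_cont hγε hγε_cont hh hh_diff hh'
    hhε hhε_diff hhε' hMγ

/-- **Error bound with estimated `h_ε` and `g_ε`.** If `g = γ*h` and
`g_ε = γ_{g_ε,h_ε}*h_ε`, then
`‖γ − γ_{g_ε,h_ε}‖²_{L²(ρ)} ≤ (2/m_ω^{h_ε})(M_ω^γ ‖h − h_ε‖²_{L²(ρ)} + ‖g − g_ε‖²_{H¹_α(ρ)})`. -/
theorem error_bound_estimated_h (γ γε h hε g gε : ℝ → ℝ) (C σ α₁ α₂ ω : ℝ)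
    (hC : 0 < C) (hσ : 0 < σ) (hα₁ : 0 < α₁) (hα₂ : 0 < α₂) (hα : α₁ + α₂ = 1)
    (hω : 0 < ω)
    (hsmoothγ : ContDiff ℝ (⊤ : ℕ∞) γ) (hsmoothγε : ContDiff ℝ (⊤ : ℕ∞) γε)
    (hsmoothh : ContDiff ℝ (⊤ : ℕ∞) h) (hsmoothhε : ContDiff ℝ (⊤ : ℕ∞) hε)
    (hdecayγ : ∀ t : ℝ, 0 ≤ t → |γ t| ≤ C * Real.exp (-σ * t))
    (hdecayγε : ∀ t : ℝ, 0 ≤ t → |γε t| ≤ C * Real.exp (-σ * t))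
    (hdecayh : ∀ t : ℝ, 0 ≤ t → |h t| ≤ C * Real.exp (-σ * t))
    (hdecayhε : ∀ t : ℝ, 0 ≤ t → |hε t| ≤ C * Real.exp (-σ * t))
    (hdecayγ' : ∀ t : ℝ, 0 ≤ t → |deriv γ t| ≤ C * Real.exp (-σ * t))
    (hdecayh' : ∀ t : ℝ, 0 ≤ t → |deriv h t| ≤ C * Real.exp (-σ * t))
    (hdecayhε' : ∀ t : ℝ, 0 ≤ t → |deriv hε t| ≤ C * Real.exp (-σ * t))
    (hmε : 0 < ⨅ τ : ℝ, specWeight hε α₁ α₂ ω τ)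
    (hMγ : BddAbove (Set.range fun τ : ℝ => specWeight γ α₁ α₂ ω τ))
    (hg : ∀ t : ℝ, 0 ≤ t → g t = conv γ h t)
    (hgε : ∀ t : ℝ, 0 ≤ t → gε t = conv γε hε t) :
    (∫ t in Set.Ioi (0 : ℝ), (γ t - γε t) ^ 2 * Real.exp (-2 * ω * t))
      ≤ (2 / ⨅ τ : ℝ, specWeight hε α₁ α₂ ω τ) *
        ((⨆ τ : ℝ, specWeight γ α₁ α₂ ω τ) *
            (∫ t in Set.Ioi (0 : ℝ), (h t - hε t) ^ 2 * Real.exp (-2 * ω * t)) +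
          ∫ t in Set.Ioi (0 : ℝ),
            (α₁ * (g t - gε t) ^ 2 + α₂ * (deriv g t - deriv gε t) ^ 2) *
              Real.exp (-2 * ω * t)) := by
  have hasOrder {f : ℝ → ℝ} (hf : Continuous f)
      (hdecay : ∀ t, 0 ≤ t → |f t| ≤ C * Real.exp (-σ * t)) : HasExpOrderLT f ω :=
    ⟨hf.aestronglyMeasurable, -σ, by linarith, C, hdecay⟩
  have hC1 {f : ℝ → ℝ} (hf : ContDiff ℝ (⊤ : ℕ∞) f) : ContDiff ℝ 1 f :=
    hf.of_le (by exact_mod_cast le_top)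
  exact error_bound_estimated_h_general hα₁.le hα₂.le
    (hasOrder hsmoothγ.continuous hdecayγ) hsmoothγ.continuous
    (hasOrder hsmoothγε.continuous hdecayγε) hsmoothγε.continuous
    (hasOrder hsmoothh.continuous hdecayh) (hC1 hsmoothh)
    (hasOrder ((hC1 hsmoothh).continuous_deriv le_rfl) hdecayh')
    (hasOrder hsmoothhε.continuous hdecayhε) (hC1 hsmoothhε)
    (hasOrder ((hC1 hsmoothhε).continuous_deriv le_rfl) hdecayhε')
    hmε hMγ (fun t ht => hg t ht.le) (fun t ht => hgε t ht.le)
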